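/- arXiv:1610.06760 — 6 statements merged into one kernel-verified Lean document; each statement's English description precedes it below -/
import Mathlib

section
/- Fix a real number β < 1 and for n ≥ 2 set B_n = (1 + 2(n−1)(1−β))/n. Let f(z) = z + Σ_{n≥2} a_n zⁿ be analytic on the open unit disc 𝔻 with Re((1−z)f′(z)) > β for all z ∈ 𝔻. Then |a_n| ≤ B_n for every integer n ≥ 2. -/
open Complex in
lemma aux_coeff (h : ℂ → ℂ) (hd : DifferentiableOn ℂ h (Metric.ball 0 1)) (r : ℝ) (h0 : 0 < r)
    (h1 : r < 1) (k : ℕ) :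
    Real.circleAverage (fun z => (z ^ k)⁻¹ * h z) 0 r = iteratedDeriv k h 0 / k.factorial := by
  have hd' : DifferentiableOn ℂ h (Metric.closedBall 0 r) :=
    hd.mono (Metric.closedBall_subset_ball h1)
  have := hd'.circleIntegral_one_div_sub_center_pow_smul h0 k
  rw [Real.circleAverage_eq_circleIntegral h0.ne']
  have e : (fun z : ℂ => (z - 0)⁻¹ • ((z ^ k)⁻¹ * h z)) = fun z => (1 / (z - 0) ^ (k + 1)) • h z := by
    funext z
    simp only [sub_zero, smul_eq_mul, one_div, pow_succ, mul_inv]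
    ring
  rw [e, this]
  simp only [smul_eq_mul]
  have := two_pi_I_ne_zero
  field_simp

lemma aux_ne {r : ℝ} (h0 : 0 < r) {z : ℂ} (hz : z ∈ Metric.sphere (0 : ℂ) |r|) : z ≠ 0 := by
  rintro rfl
  rw [abs_of_pos h0] at hz
  simp at hz
  exact h0.ne hz

lemma aux_int (h : ℂ → ℂ) (hd : DifferentiableOn ℂ h (Metric.ball 0 1)) (r : ℝ) (h0 : 0 < r)
    (h1 : r < 1) (k : ℕ) : CircleIntegrable (fun z => (z ^ k)⁻¹ * h z) 0 r := by
  apply ContinuousOn.circleIntegrable h0.le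
  have hc : ContinuousOn h (Metric.sphere 0 r) :=
    hd.continuousOn.mono (Metric.sphere_subset_closedBall.trans (Metric.closedBall_subset_ball h1))
  refine ContinuousOn.mul (ContinuousOn.inv₀ (by fun_prop) ?_) hc
  intro z hz
  exact pow_ne_zero _ (aux_ne h0 (by rwa [abs_of_pos h0]))

lemma aux_carath (p : ℂ → ℂ) (hd : DifferentiableOn ℂ p (Metric.ball 0 1)) (β : ℝ)
    (hre : ∀ z ∈ Metric.ball (0 : ℂ) 1, β < (p z).re) (r : ℝ) (h0 : 0 < r)
    (h1 : r < 1) (k : ℕ) (hk : k ≠ 0) :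
    ‖Real.circleAverage (fun z => (z ^ k)⁻¹ * p z) 0 r‖ * r ^ k ≤ 2 * ((p 0).re - β) := by
  have hsub : Metric.sphere (0 : ℂ) r ⊆ Metric.ball 0 1 :=
    Metric.sphere_subset_closedBall.trans (Metric.closedBall_subset_ball h1)
  have mean : ∀ q : ℂ → ℂ, DifferentiableOn ℂ q (Metric.ball 0 1) →
      Real.circleAverage q 0 r = q 0 := by
    intro q hq
    have := aux_coeff q hq r h0 h1 0
    simpa using this
  have cint : ∀ q : ℂ → ℂ, DifferentiableOn ℂ q (Metric.ball 0 1) → CircleIntegrable q 0 r := by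
    intro q hq
    have := aux_int q hq r h0 h1 0
    simpa using this
  set q : ℂ → ℂ := fun z => z ^ k * (p z - 2 * β) with hq
  have hqd : DifferentiableOn ℂ q (Metric.ball 0 1) := by
    simp only [hq]; fun_prop
  have hconj : Real.circleAverage (Complex.conjCLE.toContinuousLinearMap ∘ q) 0 r = 0 := by
    rw [ContinuousLinearMap.circleAverage_comp_comm _ (cint q hqd), mean q hqd]
    simp [hq, hk]
  have hrint : CircleIntegrable (fun z => (p z).re) 0 r := by
    apply ContinuousOn.circleIntegrable h0.le
    exact Complex.continuous_re.comp_continuousOn (hd.continuousOn.mono hsub)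
  have hreavg : Real.circleAverage (fun z => (p z).re) 0 r = (p 0).re := by
    have := ContinuousLinearMap.circleAverage_comp_comm Complex.reCLM (cint p hd)
    rw [mean p hd] at this
    exact this
  have hqc : CircleIntegrable (fun z => ((r : ℂ) ^ (2 * k))⁻¹ •
      (Complex.conjCLE.toContinuousLinearMap ∘ q) z) 0 r := by
    apply ContinuousOn.circleIntegrable h0.le
    refine ContinuousOn.const_smul (M := ℂ) (g := Complex.conjCLE.toContinuousLinearMap ∘ q) ?_ (((r : ℂ) ^ (2 * k))⁻¹)
    exact (ContinuousLinearMap.continuous _).comp_continuousOn (hqd.continuousOn.mono hsub)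
  have key : Real.circleAverage (fun z => (z ^ k)⁻¹ * p z) 0 r =
      Real.circleAverage (fun z => (z ^ k)⁻¹ * (2 * ((p z).re - β) : ℝ)) 0 r := by
    have h2 := Real.circleAverage_fun_add (aux_int p hd r h0 h1 k) hqc
    rw [Real.circleAverage_fun_smul, hconj, smul_zero, add_zero] at h2
    rw [← h2]
    apply Real.circleAverage_congr_sphere
    intro z hz
    have hz0 := aux_ne h0 hz
    have hzr : (starRingEnd ℂ) z * z = (r : ℂ) ^ 2 := by
      rw [← Complex.normSq_eq_conj_mul_self, Complex.normSq_eq_norm_sq]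
      simp [abs_of_pos h0] at hz
      rw [hz]; push_cast; rfl
    have hz1 : ((r : ℂ) ^ (2 * k))⁻¹ * (starRingEnd ℂ) z ^ k = (z ^ k)⁻¹ := by
      have hrc : (r : ℂ) ≠ 0 := by exact_mod_cast h0.ne'
      rw [pow_mul, ← hzr, mul_pow]
      have : (starRingEnd ℂ) z ≠ 0 := by simpa using hz0
      field_simp
    have hadd : p z + (starRingEnd ℂ) (p z) = (2 * (p z).re : ℝ) := by
      rw [Complex.add_conj]
    simp only [hq, Function.comp, smul_eq_mul]
    have : (Complex.conjCLE.toContinuousLinearMap : ℂ →L[ℝ] ℂ) (z ^ k * (p z - 2 * β)) =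
        (starRingEnd ℂ) z ^ k * ((starRingEnd ℂ) (p z) - 2 * β) := by
      simp
      exact Or.inl (Or.inl (Complex.conj_ofNat 2))
    rw [this, ← mul_assoc, hz1, ← mul_add]
    congr 1
    push_cast at hadd ⊢
    linear_combination hadd
  have hnorm : ‖Real.circleAverage (fun z => (z ^ k)⁻¹ * (2 * ((p z).re - β) : ℝ)) 0 r‖ ≤
      Real.circleAverage (fun z => ((r ^ k)⁻¹ * 2) • ((p z).re - β)) 0 r := by
    rw [Real.circleAverage_def, Real.circleAverage_def, norm_smul, smul_eq_mul, Real.norm_of_nonneg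
      (by positivity)]
    gcongr
    refine (intervalIntegral.norm_integral_le_integral_norm (by positivity)).trans_eq ?_
    apply intervalIntegral.integral_congr
    intro θ _
    have hm : circleMap 0 r θ ∈ Metric.sphere (0 : ℂ) r := circleMap_mem_sphere _ h0.le _
    have hpos := hre _ (hsub hm)
    simp only [norm_mul, norm_inv, norm_pow, smul_eq_mul]
    rw [Complex.norm_real, Real.norm_of_nonneg (by linarith)]
    simp [abs_of_pos h0]
    ring
  rw [Real.circleAverage_fun_smul, Real.circleAverage_fun_sub hrint
    (by simp), hreavg, Real.circleAverage_const] at hnorm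
  rw [key]
  calc _ ≤ ((r ^ k)⁻¹ * 2) • ((p 0).re - β) * r ^ k := by gcongr
    _ = _ := by
      simp only [smul_eq_mul]
      field_simp

lemma aux_diff (f : ℂ → ℂ) (a : ℕ → ℂ)
    (hf : ∀ z ∈ Metric.ball (0 : ℂ) 1, HasSum (fun k => a k * z ^ k) (f z)) :
    HasFPowerSeriesOnBall f (FormalMultilinearSeries.ofScalars ℂ a) 0 1 := by
  refine ⟨?_, by simp, ?_⟩
  · apply ENNReal.le_of_forall_nnreal_lt
    intro r hr
    apply FormalMultilinearSeries.le_radius_of_tendsto (l := 0)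
    have hr' : ((r : ℝ) : ℂ) ∈ Metric.ball (0 : ℂ) 1 := by
      simp
      exact_mod_cast hr
    have := (hf _ hr').summable.tendsto_atTop_zero.norm
    simpa using this
  · intro y hy
    have hy' : y ∈ Metric.ball (0 : ℂ) 1 := by
      rw [← Metric.eball_ofReal]; simpa using hy
    simpa [mul_comm] using hf y hy'

theorem coeff_bound_F1_beta
    (β : ℝ) (hβ : β < 1) (B : ℕ → ℝ)
    (hB : ∀ n, 2 ≤ n → B n = (1 + 2 * ((n : ℝ) - 1) * (1 - β)) / n)
    (f : ℂ → ℂ) (a : ℕ → ℂ)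
    (ha0 : a 0 = 0) (ha1 : a 1 = 1)
    (hf : ∀ z ∈ Metric.ball (0 : ℂ) 1, HasSum (fun k => a k * z ^ k) (f z))
    (hre : ∀ z ∈ Metric.ball (0 : ℂ) 1, β < ((1 - z) * deriv f z).re)
    (n : ℕ) (hn : 2 ≤ n) :
    ‖a n‖ ≤ B n := by
  have hps := aux_diff f a hf
  have hfd : DifferentiableOn ℂ f (Metric.ball 0 1) := by
    have := hps.differentiableOn
    rwa [← ENNReal.ofReal_one, Metric.eball_ofReal] at this
  have hd : DifferentiableOn ℂ (deriv f) (Metric.ball 0 1) := hfd.deriv Metric.isOpen_ball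
  have hcoef : ∀ m, iteratedDeriv m f 0 = m.factorial * a m := by
    intro m
    have := hps.factorial_smul 1 m
    rw [iteratedFDeriv_apply_eq_iteratedDeriv_mul_prod, Finset.prod_const_one, one_smul] at this
    rw [← this]
    simp
  have havg : ∀ r : ℝ, 0 < r → r < 1 → ∀ k : ℕ,
      Real.circleAverage (fun z => (z ^ k)⁻¹ * deriv f z) 0 r = (k + 1 : ℂ) * a (k + 1) := by
    intro r h0 h1 k
    rw [aux_coeff _ hd r h0 h1 k, ← iteratedDeriv_succ', hcoef, Nat.factorial_succ]
    have : (k.factorial : ℂ) ≠ 0 := by exact_mod_cast k.factorial_ne_zero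
    push_cast
    field_simp
  have hf0 : deriv f 0 = 1 := by
    have := hcoef 1
    simpa [ha1] using this
  have step : ∀ k : ℕ, ‖((k + 1 : ℕ) + 1 : ℂ) * a (k + 1 + 1) - (k + 1 : ℂ) * a (k + 1)‖
      ≤ 2 * (1 - β) := by
    intro k
    have hr : ∀ r : ℝ, 0 < r → r < 1 →
        ‖((k + 1 : ℕ) + 1 : ℂ) * a (k + 1 + 1) - (k + 1 : ℂ) * a (k + 1)‖ * r ^ (k + 1)
          ≤ 2 * (1 - β) := by
      intro r h0 h1
      have hc := aux_carath (fun z => (1 - z) * deriv f z) (by fun_prop) β hre r h0 h1 (k + 1)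
        (by simp)
      rw [← havg r h0 h1 (k + 1), ← havg r h0 h1 k,
        ← Real.circleAverage_fun_sub (aux_int _ hd r h0 h1 _) (aux_int _ hd r h0 h1 _)]
      simp only [sub_zero, one_mul, hf0, Complex.one_re] at hc
      refine Eq.trans_le ?_ hc
      congr 2
      apply Real.circleAverage_congr_sphere
      intro z hz
      have hz0 := aux_ne h0 hz
      simp only
      field_simp
      ring
    have ht : Filter.Tendsto (fun r : ℝ =>
        ‖((k + 1 : ℕ) + 1 : ℂ) * a (k + 1 + 1) - (k + 1 : ℂ) * a (k + 1)‖ * r ^ (k + 1))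
        (nhdsWithin 1 (Set.Iio 1)) (nhds
        (‖((k + 1 : ℕ) + 1 : ℂ) * a (k + 1 + 1) - (k + 1 : ℂ) * a (k + 1)‖ * 1 ^ (k + 1))) := by
      apply Filter.Tendsto.mono_left _ nhdsWithin_le_nhds
      apply Continuous.tendsto
      fun_prop
    rw [one_pow, mul_one] at ht
    refine le_of_tendsto ht ?_
    filter_upwards [Ioo_mem_nhdsLT (show (0 : ℝ) < 1 by norm_num)] with r hr'
    exact hr r hr'.1 hr'.2
  have main : ∀ k : ℕ, ‖(k + 1 : ℂ) * a (k + 1)‖ ≤ 1 + 2 * k * (1 - β) := by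
    intro k
    induction k with
    | zero => simp [ha1]
    | succ k ih =>
      have h3 := norm_add_le (((k + 1 : ℕ) + 1 : ℂ) * a (k + 1 + 1) - (k + 1 : ℂ) * a (k + 1))
        ((k + 1 : ℂ) * a (k + 1))
      rw [sub_add_cancel] at h3
      have h4 := step k
      push_cast at *
      linarith
  obtain ⟨m, rfl⟩ : ∃ m, n = m + 1 := ⟨n - 1, by omega⟩
  rw [hB _ hn, le_div_iff₀ (by positivity)]
  have h5 := main m
  rw [norm_mul] at h5
  have h6 : ‖(m + 1 : ℂ)‖ = m + 1 := by
    have := Complex.norm_natCast (m + 1)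
    push_cast at this
    exact this
  rw [h6] at h5
  push_cast
  calc _ = (m + 1 : ℝ) * ‖a (m + 1)‖ := by ring
    _ ≤ _ := h5
    _ = _ := by ring
end

section
/- Fix a real number β < 1 and for n ≥ 2 define C_n = (1 + (n−1)(1−β))/n if n is odd and C_n = 1−β if n is even. Let f(z) = z + Σ_{n≥2} a_n zⁿ be analytic on the open unit disc 𝔻 with Re((1−z²)f′(z)) > β for all z ∈ 𝔻. Then for all integers n, m ≥ 2 such that n and m are not both even, and every real μ with μ ≥ max{nm/((n+m−1)(1−β)), nm/(n+m−1)}, one has |μ a_n a_m − a_{n+m−1}| ≤ μ C_n C_m − C_{n+m−1}. -/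
open Complex

lemma HasSum.congr_fun' {f g : ℕ → ℂ} {s : ℂ} (h : HasSum f s) (e : ∀ k, g k = f k) :
    HasSum g s := by
  rw [show g = f from funext e]; exact h

/-- Power series coefficients of the derivative. -/
lemma hasSum_deriv_aux (f : ℂ → ℂ) (a : ℕ → ℂ)
    (hf : ∀ z ∈ Metric.ball (0 : ℂ) 1, HasSum (fun k => a k * z ^ k) (f z)) :
    ∀ z ∈ Metric.ball (0 : ℂ) 1,
      HasSum (fun k : ℕ => ((k : ℂ) + 1) * a (k + 1) * z ^ k) (deriv f z) := by
  have hp : HasFPowerSeriesOnBall f (FormalMultilinearSeries.ofScalars ℂ a) 0 1 := by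
    refine ⟨?_, by norm_num, ?_⟩
    · refine ENNReal.le_of_forall_nnreal_lt fun r hr => ?_
      apply FormalMultilinearSeries.le_radius_of_summable_norm
      have hr1 : (r : ℝ) < 1 := by exact_mod_cast hr
      have := (hf (r : ℂ) (by simpa using hr1)).summable.norm
      simpa [FormalMultilinearSeries.ofScalars_norm] using this
    · intro y hy
      have hy1 : ‖y‖₊ < 1 := by simpa [enorm] using hy
      have := hf y (by simpa using (by exact_mod_cast hy1 : ‖y‖ < 1))
      simpa [FormalMultilinearSeries.ofScalars_apply_eq, mul_comm] using this
  have hd : DifferentiableOn ℂ f (Metric.ball 0 1) := by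
    have := hp.differentiableOn
    simpa [← Metric.eball_ofReal] using this
  have hd' := hd.deriv Metric.isOpen_ball
  intro z hz
  have h1 := hasSum_taylorSeries_on_ball hd' hz
  refine HasSum.congr_fun' h1 fun k => ?_
  have h2 := hp.factorial_smul (1 : ℂ) (k + 1)
  rw [← iteratedDeriv_eq_iteratedFDeriv, iteratedDeriv_succ'] at h2
  rw [← h2, FormalMultilinearSeries.ofScalars_apply_eq]
  have : ((k.factorial : ℕ) : ℂ) ≠ 0 := by exact_mod_cast k.factorial_ne_zero
  simp [Nat.factorial_succ]
  field_simp

lemma int_exp (k : ℤ) : ∫ θ in (0 : ℝ)..(2 * Real.pi), exp (k * I * θ)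
    = if k = 0 then 2 * (Real.pi : ℂ) else 0 := by
  split_ifs with h
  · simp [h]
  · have hk : (k : ℂ) * I ≠ 0 := by simp [h]
    rw [integral_exp_mul_complex hk]
    have : exp (k * I * ((2 * Real.pi : ℝ) : ℂ)) = 1 := by
      rw [Complex.exp_eq_one_iff]; exact ⟨k, by push_cast; ring⟩
    rw [this]; simp

lemma int_series (c : ℕ → ℂ) (hc : Summable fun j => ‖c j‖) (k : ℤ) :
    ∫ θ in (0 : ℝ)..(2 * Real.pi), (∑' j : ℕ, c j * exp (j * I * θ)) * exp (-k * I * θ)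
    = 2 * (Real.pi : ℂ) * (if 0 ≤ k then c k.toNat else 0) := by
  have hn : ∀ (x : ℤ) (θ : ℝ), ‖exp (x * I * θ)‖ = 1 := by
    intro x θ
    have : (x * I * θ : ℂ) = ((x * θ : ℝ) : ℂ) * I := by push_cast; ring
    rw [this, norm_exp_ofReal_mul_I]
  have hs : HasSum (fun j : ℕ => ∫ θ in (0 : ℝ)..(2 * Real.pi), c j * exp (((j - k : ℤ) : ℂ) * I * θ))
      (∫ θ in (0 : ℝ)..(2 * Real.pi), (∑' j : ℕ, c j * exp (j * I * θ)) * exp (-k * I * θ)) := by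
    apply intervalIntegral.hasSum_integral_of_dominated_convergence (fun j _ => ‖c j‖)
    · intro j
      exact Continuous.aestronglyMeasurable (by fun_prop)
    · intro j
      refine Filter.Eventually.of_forall fun θ _ => ?_
      rw [norm_mul, hn, mul_one]
    · exact Filter.Eventually.of_forall fun θ _ => hc
    · simp
    · refine Filter.Eventually.of_forall fun θ _ => ?_
      have hsum : Summable fun j : ℕ => c j * exp (j * I * θ) := by
        apply Summable.of_norm
        refine hc.congr fun j => ?_
        have := hn j θ
        push_cast at this
        rw [norm_mul, this, mul_one]
      have := hsum.hasSum.mul_right (exp (-k * I * θ))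
      refine HasSum.congr_fun' this fun j => ?_
      rw [mul_assoc (c j), ← Complex.exp_add]
      congr 2; push_cast; ring
  have hs2 : HasSum (fun j : ℕ => ∫ θ in (0 : ℝ)..(2 * Real.pi), c j * exp (((j - k : ℤ) : ℂ) * I * θ))
     (2 * (Real.pi : ℂ) * (if 0 ≤ k then c k.toNat else 0)) := by
    have e : ∀ j : ℕ, (∫ θ in (0 : ℝ)..(2 * Real.pi), c j * exp (((j - k : ℤ) : ℂ) * I * θ))
        = if (j : ℤ) = k then 2 * (Real.pi : ℂ) * c j else 0 := by
      intro j
      rw [intervalIntegral.integral_const_mul, int_exp]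
      by_cases h : (j : ℤ) = k
      · simp [h, mul_comm]
      · simp [h, sub_eq_zero]
    simp_rw [e]
    split_ifs with h
    · obtain ⟨n, rfl⟩ := Int.eq_ofNat_of_zero_le h
      simp only [Int.toNat_natCast, Nat.cast_inj]
      convert hasSum_ite_eq n (2 * (Real.pi : ℂ) * c n) using 2 with j
      split_ifs with h
      · rw [h]
      · rfl
    · rw [mul_zero]
      convert hasSum_zero using 2 with j
      rw [if_neg]; omega
  exact hs.unique hs2

lemma norm_e (k : ℕ) (θ : ℝ) : ‖exp (-(k : ℂ) * I * θ)‖ = 1 := by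
  have : (-(k : ℂ) * I * θ : ℂ) = ((-k * θ : ℝ) : ℂ) * I := by push_cast; ring
  rw [this, norm_exp_ofReal_mul_I]

lemma cont_series (c : ℕ → ℂ) (hc : Summable fun j => ‖c j‖) :
    Continuous fun θ : ℝ => ∑' j : ℕ, c j * exp (j * I * θ) := by
  refine continuous_tsum (fun j => by fun_prop) hc fun j θ => ?_
  have : ((j : ℂ) * I * θ : ℂ) = ((j * θ : ℝ) : ℂ) * I := by push_cast; ring
  rw [norm_mul, this, norm_exp_ofReal_mul_I, mul_one]

lemma moment (c : ℕ → ℂ) (hc : Summable fun j => ‖c j‖) (k : ℕ) :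
    ∫ θ in (0 : ℝ)..(2 * Real.pi),
      (((∑' j : ℕ, c j * exp (j * I * θ)).re : ℝ) : ℂ) * exp (-(k : ℂ) * I * θ)
    = (Real.pi : ℂ) * (c k + if k = 0 then (starRingEnd ℂ) (c 0) else 0) := by
  have hcont := cont_series c hc
  have h1 := int_series c hc k
  have h2 := int_series c hc (-k)
  set G : ℝ → ℂ := fun θ => ∑' j : ℕ, c j * exp (j * I * θ) with hG
  have h3 : ∫ θ in (0 : ℝ)..(2 * Real.pi), (starRingEnd ℂ) (G θ * exp (-((-k : ℤ) : ℂ) * I * θ))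
      = (starRingEnd ℂ) (2 * (Real.pi : ℂ) * (if (0 : ℤ) ≤ -k then c (-k : ℤ).toNat else 0)) := by
    rw [← h2, intervalIntegral.integral_of_le (by positivity),
      intervalIntegral.integral_of_le (by positivity), integral_conj]
  have e : ∀ θ : ℝ, (((G θ).re : ℝ) : ℂ) * exp (-(k : ℂ) * I * θ)
      = (1 / 2 : ℂ) * (G θ * exp (-((k : ℤ) : ℂ) * I * θ)
        + (starRingEnd ℂ) (G θ * exp (-((-k : ℤ) : ℂ) * I * θ))) := by
    intro θ
    rw [Complex.re_eq_add_conj, map_mul, ← Complex.exp_conj]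
    simp only [map_mul, conj_I, conj_ofReal, Int.cast_neg, Int.cast_natCast, neg_neg,
      map_natCast]
    have : (k : ℂ) * -I * θ = -k * I * θ := by ring
    rw [this]; ring
  change ∫ θ in (0 : ℝ)..(2 * Real.pi), (((G θ).re : ℝ) : ℂ) * exp (-(k : ℂ) * I * θ) = _
  simp_rw [e]
  rw [intervalIntegral.integral_const_mul, intervalIntegral.integral_add, h3, h1]
  · rcases Nat.eq_zero_or_pos k with rfl | hk
    · simp [map_ofNat]; ring
    · rw [if_pos (by positivity), if_neg (by omega), if_neg (by omega)]
      simp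
      ring
  · exact Continuous.intervalIntegrable (by fun_prop) _ _
  · apply Continuous.intervalIntegrable
    exact Complex.continuous_conj.comp (by fun_prop)

lemma carath (c : ℕ → ℂ) (hc : Summable fun j => ‖c j‖) (h0 : c 0 = 1)
    (hpos : ∀ θ : ℝ, 0 ≤ (∑' j : ℕ, c j * exp (j * I * θ)).re) :
    (∀ k, 1 ≤ k → ‖c k‖ ≤ 2) ∧
    (∀ k l, 1 ≤ k → 1 ≤ l → ‖c k * c l - c (k + l)‖ ≤ 2) := by
  have hcont := cont_series c hc
  have hm := moment c hc
  set u : ℝ → ℝ := fun θ => (∑' j : ℕ, c j * exp (j * I * θ)).re with hu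
  have hucont : Continuous u := Complex.continuous_re.comp hcont
  have hpi := Real.pi_pos
  have m0 : ∫ θ in (0 : ℝ)..(2 * Real.pi), u θ = 2 * Real.pi := by
    have := hm 0
    simp only [h0, Nat.cast_zero, neg_zero, zero_mul, Complex.exp_zero, mul_one, if_true, map_one] at this
    have h' : (∫ θ in (0 : ℝ)..(2 * Real.pi), ((u θ : ℝ) : ℂ)) = ((2 * Real.pi : ℝ) : ℂ) := by
      refine Eq.trans this ?_
      push_cast; ring
    rw [intervalIntegral.integral_ofReal] at h'
    exact_mod_cast h'
  have mk : ∀ k : ℕ, 1 ≤ k →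
      ∫ θ in (0 : ℝ)..(2 * Real.pi), ((u θ : ℝ) : ℂ) * exp (-(k : ℂ) * I * θ) = Real.pi * c k := by
    intro k hk
    have := hm k
    rwa [if_neg (by omega), add_zero] at this
  constructor
  · intro k hk
    have h1 := intervalIntegral.norm_integral_le_integral_norm (μ := MeasureTheory.volume)
      (f := fun θ : ℝ => ((u θ : ℝ) : ℂ) * exp (-(k : ℂ) * I * θ))
      (by positivity : (0 : ℝ) ≤ 2 * Real.pi)
    have e : ∀ θ : ℝ, ‖((u θ : ℝ) : ℂ) * exp (-(k : ℂ) * I * θ)‖ = u θ := by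
      intro θ
      rw [norm_mul, norm_e, mul_one, Complex.norm_real, Real.norm_of_nonneg (hpos θ)]
    simp_rw [e] at h1
    rw [m0, mk k hk, norm_mul, Complex.norm_real, Real.norm_of_nonneg hpi.le] at h1
    nlinarith
  · intro k l hk hl
    set w := c l with hw
    have h1 := intervalIntegral.norm_integral_le_integral_norm (μ := MeasureTheory.volume)
      (f := fun θ : ℝ => (((u θ : ℝ) : ℂ) * exp (-(k : ℂ) * I * θ)) * w
         - ((u θ : ℝ) : ℂ) * exp (-((k + l : ℕ) : ℂ) * I * θ))
      (by positivity : (0 : ℝ) ≤ 2 * Real.pi)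
    have lhs : ∫ θ in (0 : ℝ)..(2 * Real.pi), ((((u θ : ℝ) : ℂ) * exp (-(k : ℂ) * I * θ)) * w
         - ((u θ : ℝ) : ℂ) * exp (-((k + l : ℕ) : ℂ) * I * θ))
         = Real.pi * (c k * w - c (k + l)) := by
      rw [intervalIntegral.integral_sub, intervalIntegral.integral_mul_const, mk k hk,
        mk (k + l) (by omega)]
      · ring
      · exact Continuous.intervalIntegrable (by fun_prop) _ _
      · exact Continuous.intervalIntegrable (by fun_prop) _ _
    rw [lhs] at h1
    have hre : ∫ θ in (0 : ℝ)..(2 * Real.pi),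
        ((starRingEnd ℂ) w * (((u θ : ℝ) : ℂ) * exp (-(l : ℂ) * I * θ))).re
        = Real.pi * ‖w‖ ^ 2 := by
      have := Complex.reCLM.intervalIntegral_comp_comm (μ := MeasureTheory.volume)
        (a := 0) (b := 2 * Real.pi)
        (f := fun θ : ℝ => (starRingEnd ℂ) w * (((u θ : ℝ) : ℂ) * exp (-(l : ℂ) * I * θ)))
        (Continuous.intervalIntegrable (by fun_prop) _ _)
      simp only [Complex.reCLM_apply] at this
      rw [this, intervalIntegral.integral_const_mul, mk l hl]
      have e2 : (starRingEnd ℂ) w * ((Real.pi : ℂ) * c l) = ((Real.pi * ‖w‖ ^ 2 : ℝ) : ℂ) := by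
        push_cast
        rw [← Complex.conj_mul', ← hw]; ring
      rw [e2, Complex.ofReal_re]
    have rhs : ∫ θ in (0 : ℝ)..(2 * Real.pi), ((1 + ‖w‖ ^ 2 / 2) * u θ -
        ((starRingEnd ℂ) w * (((u θ : ℝ) : ℂ) * exp (-(l : ℂ) * I * θ))).re) = 2 * Real.pi := by
      rw [intervalIntegral.integral_sub, intervalIntegral.integral_const_mul, hre, m0]
      · ring
      · exact Continuous.intervalIntegrable (by fun_prop) _ _
      · apply Continuous.intervalIntegrable
        exact Complex.continuous_re.comp (by fun_prop)
    have h2 : ∫ θ in (0 : ℝ)..(2 * Real.pi), ‖(((u θ : ℝ) : ℂ) * exp (-(k : ℂ) * I * θ)) * w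
         - ((u θ : ℝ) : ℂ) * exp (-((k + l : ℕ) : ℂ) * I * θ)‖ ≤
        ∫ θ in (0 : ℝ)..(2 * Real.pi), ((1 + ‖w‖ ^ 2 / 2) * u θ -
        ((starRingEnd ℂ) w * (((u θ : ℝ) : ℂ) * exp (-(l : ℂ) * I * θ))).re) := by
      apply intervalIntegral.integral_mono_on (by positivity)
      · exact Continuous.intervalIntegrable (by fun_prop) _ _
      · apply Continuous.intervalIntegrable
        exact Continuous.sub (by fun_prop) (Complex.continuous_re.comp (by fun_prop))
      · intro θ _
        have e1 : exp (-((k + l : ℕ) : ℂ) * I * θ)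
            = exp (-(k : ℂ) * I * θ) * exp (-(l : ℂ) * I * θ) := by
          rw [← Complex.exp_add]; congr 1; push_cast; ring
        have hY := norm_e l θ
        rw [e1]
        set X := exp (-(k : ℂ) * I * θ) with hX
        set Y := exp (-(l : ℂ) * I * θ)
        have e2 : ((u θ : ℝ) : ℂ) * X * w - ((u θ : ℝ) : ℂ) * (X * Y)
            = ((u θ : ℝ) : ℂ) * X * (w - Y) := by ring
        have e3 : ((starRingEnd ℂ) w * (((u θ : ℝ) : ℂ) * Y)).re
            = u θ * (w.re * Y.re + w.im * Y.im) := by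
          simp; ring
        rw [e2, e3, norm_mul, norm_mul, hX, norm_e, mul_one, Complex.norm_real,
          Real.norm_of_nonneg (hpos θ)]
        have hs : ‖w - Y‖ ^ 2 = ‖w‖ ^ 2 + ‖Y‖ ^ 2 - 2 * (w.re * Y.re + w.im * Y.im) := by
          simp only [Complex.sq_norm, Complex.normSq_apply, Complex.sub_re, Complex.sub_im]
          ring
        rw [hY] at hs
        have hk : ‖w - Y‖ ≤ (1 + ‖w‖ ^ 2 / 2) - (w.re * Y.re + w.im * Y.im) := by
          nlinarith [sq_nonneg (‖w - Y‖ - 1)]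
        nlinarith [mul_le_mul_of_nonneg_left hk (hpos θ)]
    have h3 := h1.trans (h2.trans rhs.le)
    rw [norm_mul, Complex.norm_real, Real.norm_of_nonneg hpi.le] at h3
    nlinarith

/-- Coefficient bounds for functions with positive real part on the disc. -/
lemma carath_disc (p : ℕ → ℂ) (h0 : p 0 = 1) (P : ℂ → ℂ)
    (hP : ∀ z ∈ Metric.ball (0 : ℂ) 1, HasSum (fun k => p k * z ^ k) (P z))
    (hpos : ∀ z ∈ Metric.ball (0 : ℂ) 1, 0 ≤ (P z).re) :
    (∀ k, 1 ≤ k → ‖p k‖ ≤ 2) ∧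
    (∀ k l, 1 ≤ k → 1 ≤ l → ‖p k * p l - p (k + l)‖ ≤ 2) := by
  have key : ∀ r : ℝ, 0 ≤ r → r < 1 → (∀ k, 1 ≤ k → ‖p k * (r : ℂ) ^ k‖ ≤ 2) ∧
    (∀ k l, 1 ≤ k → 1 ≤ l →
      ‖p k * (r : ℂ) ^ k * (p l * (r : ℂ) ^ l) - p (k + l) * (r : ℂ) ^ (k + l)‖ ≤ 2) := by
    intro r hr0 hr1
    apply carath (fun k => p k * (r : ℂ) ^ k)
    · exact (hP r (by simpa [abs_of_nonneg hr0] using hr1)).summable.norm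
    · simp [h0]
    · intro θ
      have hz : (r : ℂ) * exp (θ * I) ∈ Metric.ball (0 : ℂ) 1 := by
        simpa [abs_of_nonneg hr0, norm_exp_ofReal_mul_I] using hr1
      have := (hP _ hz).tsum_eq
      have e : (∑' j : ℕ, p j * (r : ℂ) ^ j * exp (j * I * θ)) = P (r * exp (θ * I)) := by
        rw [← this]
        congr 1; funext j
        rw [mul_pow, ← Complex.exp_nat_mul, mul_assoc]
        congr 3; ring
      rw [e]; exact hpos _ hz
  have hev : ∀ᶠ r : ℝ in nhdsWithin 1 (Set.Iio 1), 0 ≤ r ∧ r < 1 := by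
    have h1 : ∀ᶠ r : ℝ in nhdsWithin 1 (Set.Iio 1), 0 < r :=
      nhdsWithin_le_nhds (lt_mem_nhds (by norm_num))
    filter_upwards [h1, self_mem_nhdsWithin] with r a b using ⟨a.le, b⟩
  constructor
  · intro k hk
    have hc : Continuous fun r : ℝ => ‖p k * (r : ℂ) ^ k‖ := by fun_prop
    have ht := (hc.tendsto 1).mono_left (nhdsWithin_le_nhds (s := Set.Iio 1))
    have := le_of_tendsto ht (hev.mono fun r h => (key r h.1 h.2).1 k hk)
    simpa using this
  · intro k l hk hl
    have hc : Continuous fun r : ℝ =>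
      ‖p k * (r : ℂ) ^ k * (p l * (r : ℂ) ^ l) - p (k + l) * (r : ℂ) ^ (k + l)‖ := by fun_prop
    have ht := (hc.tendsto 1).mono_left (nhdsWithin_le_nhds (s := Set.Iio 1))
    have := le_of_tendsto ht (hev.mono fun r h => (key r h.1 h.2).2 k l hk hl)
    simpa using this

lemma coeff_facts (β : ℝ) (hβ : β < 1) (f : ℂ → ℂ) (a : ℕ → ℂ) (ha1 : a 1 = 1)
    (hf : ∀ z ∈ Metric.ball (0 : ℂ) 1, HasSum (fun k => a k * z ^ k) (f z))
    (hre : ∀ z ∈ Metric.ball (0 : ℂ) 1, β < ((1 - z ^ 2) * deriv f z).re) :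
    ∃ p : ℕ → ℂ, (∀ k, 1 ≤ k → ‖p k‖ ≤ 2) ∧
      (∀ k l, 1 ≤ k → 1 ≤ l → ‖p k * p l - p (k + l)‖ ≤ 2) ∧
      ∀ j : ℕ, ((j + 2 : ℕ) : ℂ) * a (j + 2) = (j : ℂ) * a j + ((1 - β : ℝ) : ℂ) * p (j + 1) := by
  have hb : (0 : ℝ) < 1 - β := by linarith
  have hbc : ((1 - β : ℝ) : ℂ) ≠ 0 := by exact_mod_cast hb.ne'
  set D : ℕ → ℂ := fun j => ((j : ℂ) + 1) * a (j + 1) - ((j - 1 : ℕ) : ℂ) * a (j - 1) with hD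
  have hDs : ∀ z ∈ Metric.ball (0 : ℂ) 1,
      HasSum (fun j => D j * z ^ j) ((1 - z ^ 2) * deriv f z) := by
    intro z hz
    have h1 := hasSum_deriv_aux f a hf z hz
    have h2 : HasSum (fun j : ℕ => ((j - 1 : ℕ) : ℂ) * a (j - 1) * z ^ j) (deriv f z * z ^ 2) := by
      rw [← hasSum_nat_add_iff' 2]
      simp only [Finset.sum_range_succ, Finset.sum_range_zero]
      simp only [Nat.zero_sub, Nat.sub_self, Nat.cast_zero, zero_mul, add_zero, sub_zero]
      refine HasSum.congr_fun' (h1.mul_right (z ^ 2)) fun k => ?_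
      have : k + 2 - 1 = k + 1 := by omega
      rw [this]; push_cast; ring
    have h3 := h1.sub h2
    have e : (1 - z ^ 2) * deriv f z = deriv f z - deriv f z * z ^ 2 := by ring
    rw [e]
    refine HasSum.congr_fun' h3 fun k => ?_
    simp only [hD]; ring
  set p : ℕ → ℂ := fun j => if j = 0 then 1 else D j / ((1 - β : ℝ) : ℂ) with hp
  have hps := carath_disc p (by simp [hp])
    (fun z => ((1 - z ^ 2) * deriv f z - (β : ℂ)) / ((1 - β : ℝ) : ℂ)) ?_ ?_
  · refine ⟨p, hps.1, hps.2, ?_⟩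
    intro j
    simp only [hp, hD]
    rw [if_neg (by omega), mul_div_cancel₀ _ hbc]
    have : j + 1 - 1 = j := by omega
    rw [this]; push_cast; ring
  · intro z hz
    have h4 := ((hDs z hz).sub (hasSum_ite_eq 0 (β : ℂ))).div_const ((1 - β : ℝ) : ℂ)
    refine HasSum.congr_fun' h4 fun k => ?_
    by_cases hk : k = 0
    · subst hk
      simp only [hp, hD, if_true, pow_zero, Nat.zero_sub, Nat.cast_zero, zero_mul, zero_add, ha1]
      field_simp
      push_cast; ring
    · simp only [hp, hk, if_false]; ring
  · intro z hz
    rw [Complex.div_ofReal_re]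
    apply div_nonneg _ hb.le
    have := hre z hz
    simp only [Complex.sub_re, Complex.ofReal_re] at this ⊢
    linarith

lemma main_odd (b : ℝ) (hb : 0 < b) (A p : ℕ → ℂ) (B : ℕ → ℝ)
    (hp : ∀ k, 1 ≤ k → ‖p k‖ ≤ 2)
    (hpp : ∀ k l, 1 ≤ k → 1 ≤ l → ‖p k * p l - p (k + l)‖ ≤ 2)
    (hA : ∀ j, A (j + 2) = A j + (b : ℂ) * p (j + 1))
    (hA0 : A 0 = 0) (hA1 : A 1 = 1) (hB0 : B 0 = 0) (hB1 : B 1 = 1)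
    (hB : ∀ j, B (j + 2) = B j + 2 * b) (L : ℝ) (hL : 1 ≤ L) (hLb : 1 ≤ L * b)
    (n q : ℕ) :
    ‖(L : ℂ) * A (n + 2) * A (2 * q + 1) - A (n + 2 + 2 * q)‖
      ≤ L * B (n + 2) * B (2 * q + 1) - B (n + 2 + 2 * q) := by
  have hAB : ∀ k, ‖A k‖ ≤ B k ∧ ‖A (k + 1)‖ ≤ B (k + 1) := by
    intro k
    induction k with
    | zero => simp [hA0, hA1, hB0, hB1]
    | succ k ih =>
      refine ⟨ih.2, ?_⟩
      rw [show k + 1 + 1 = k + 2 from rfl, hA, hB]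
      refine (norm_add_le _ _).trans ?_
      rw [norm_mul, Complex.norm_real, Real.norm_of_nonneg hb.le]
      nlinarith [ih.1, hp (k + 1) (by omega)]
  have hnL : ‖(L : ℂ)‖ = L := by rw [Complex.norm_real, Real.norm_of_nonneg (by linarith)]
  have hnb : ‖(b : ℂ)‖ = b := by rw [Complex.norm_real, Real.norm_of_nonneg hb.le]
  have step : ∀ l, 1 ≤ l → ‖(L : ℂ) * A (n + 2) * p l - p (n + 1 + l)‖ ≤ 2 * (L * B (n + 2) - 1) := by
    intro l hl
    have e : (L : ℂ) * A (n + 2) * p l - p (n + 1 + l)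
        = (L : ℂ) * A n * p l + (((L * b - 1 : ℝ) : ℂ) * (p (n + 1) * p l)
          + (p (n + 1) * p l - p (n + 1 + l))) := by
      rw [hA]; push_cast; ring
    rw [e, hB]
    refine (norm_add_le _ _).trans ?_
    have h2 := norm_add_le (((L * b - 1 : ℝ) : ℂ) * (p (n + 1) * p l))
      (p (n + 1) * p l - p (n + 1 + l))
    rw [norm_mul, norm_mul, Complex.norm_real, Real.norm_of_nonneg (by linarith : 0 ≤ L * b - 1)] at h2
    rw [norm_mul, norm_mul, hnL]
    have h3 : ‖p (n + 1)‖ * ‖p l‖ ≤ 2 * 2 :=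
      mul_le_mul (hp _ (by omega)) (hp _ hl) (norm_nonneg _) (by norm_num)
    have h4 : ‖A n‖ * ‖p l‖ ≤ B n * 2 :=
      mul_le_mul (hAB n).1 (hp _ hl) (norm_nonneg _) ((norm_nonneg _).trans (hAB n).1)
    have h5 := hpp (n + 1) l (by omega) hl
    have h6 := mul_le_mul_of_nonneg_left h3 (by linarith : 0 ≤ L * b - 1)
    have h7 := mul_le_mul_of_nonneg_left h4 (by linarith : 0 ≤ L)
    linarith
  induction q with
  | zero =>
    simp only [mul_zero, zero_add, add_zero, hA1, hB1, mul_one]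
    have e : (L : ℂ) * A (n + 2) - A (n + 2) = ((L - 1 : ℝ) : ℂ) * A (n + 2) := by push_cast; ring
    rw [e, norm_mul, Complex.norm_real, Real.norm_of_nonneg (by linarith : 0 ≤ L - 1)]
    nlinarith [mul_le_mul_of_nonneg_left (hAB (n + 2)).1 (by linarith : 0 ≤ L - 1)]
  | succ q ih =>
    have i1 : 2 * (q + 1) + 1 = 2 * q + 1 + 2 := by ring
    have i2 : n + 2 + 2 * (q + 1) = n + 2 + 2 * q + 2 := by ring
    have i3 : n + 2 + 2 * q + 1 = n + 1 + (2 * q + 1 + 1) := by ring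
    rw [i1, i2, hA (2 * q + 1), hA (n + 2 + 2 * q), hB (2 * q + 1), hB (n + 2 + 2 * q), i3]
    have e : (L : ℂ) * A (n + 2) * (A (2 * q + 1) + b * p (2 * q + 1 + 1))
        - (A (n + 2 + 2 * q) + b * p (n + 1 + (2 * q + 1 + 1)))
        = ((L : ℂ) * A (n + 2) * A (2 * q + 1) - A (n + 2 + 2 * q))
          + b * ((L : ℂ) * A (n + 2) * p (2 * q + 1 + 1) - p (n + 1 + (2 * q + 1 + 1))) := by ring
    rw [e]
    refine (norm_add_le _ _).trans ?_
    rw [norm_mul (b : ℂ), hnb]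
    have := mul_le_mul_of_nonneg_left (step (2 * q + 1 + 1) (by omega)) hb.le
    linarith

theorem zalcman_F2_beta
    (β : ℝ) (hβ : β < 1) (C : ℕ → ℝ)
    (hC : ∀ n, 2 ≤ n →
      C n = if Odd n then (1 + ((n : ℝ) - 1) * (1 - β)) / n else 1 - β)
    (f : ℂ → ℂ) (a : ℕ → ℂ)
    (ha0 : a 0 = 0) (ha1 : a 1 = 1)
    (hf : ∀ z ∈ Metric.ball (0 : ℂ) 1, HasSum (fun k => a k * z ^ k) (f z))
    (hre : ∀ z ∈ Metric.ball (0 : ℂ) 1, β < ((1 - z ^ 2) * deriv f z).re)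
    (n m : ℕ) (hn : 2 ≤ n) (hm : 2 ≤ m) (hpar : ¬(Even n ∧ Even m)) (μ : ℝ)
    (hμ : max ((n : ℝ) * m / (((n : ℝ) + m - 1) * (1 - β)))
            ((n : ℝ) * m / ((n : ℝ) + m - 1)) ≤ μ) :
    ‖(μ : ℂ) * a n * a m - a (n + m - 1)‖ ≤ μ * C n * C m - C (n + m - 1) := by
  obtain ⟨p, hp, hpp, hA⟩ := coeff_facts β hβ f a ha1 hf hre
  have hb : (0 : ℝ) < 1 - β := by linarith
  set B : ℕ → ℝ := fun j => if Odd j then 1 + ((j : ℝ) - 1) * (1 - β) else j * (1 - β) with hBdef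
  have hB : ∀ j, B (j + 2) = B j + 2 * (1 - β) := by
    intro j
    have : Odd (j + 2) ↔ Odd j := by simp [Nat.odd_add, parity_simps]
    simp only [hBdef, this]
    split_ifs <;> push_cast <;> ring
  have hCB : ∀ j, 2 ≤ j → C j = B j / j := by
    intro j hj
    have : (j : ℝ) ≠ 0 := by positivity
    rw [hC j hj]
    simp only [hBdef]
    split_ifs
    · rfl
    · field_simp
  have core : ∀ n m : ℕ, 2 ≤ n → 2 ≤ m → Odd m →
      (n : ℝ) * m / (((n : ℝ) + m - 1) * (1 - β)) ≤ μ → (n : ℝ) * m / ((n : ℝ) + m - 1) ≤ μ →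
      ‖(μ : ℂ) * a n * a m - a (n + m - 1)‖ ≤ μ * C n * C m - C (n + m - 1) := by
    intro n m hn hm hodd h1 h2
    obtain ⟨q, rfl⟩ := hodd
    obtain ⟨n, rfl⟩ := Nat.exists_eq_add_of_le' hn
    have i : n + 2 + (2 * q + 1) - 1 = n + 2 + 2 * q := by omega
    have iN : (((n + 2 : ℕ) : ℝ) + ((2 * q + 1 : ℕ) : ℝ) - 1) = ((n + 2 + 2 * q : ℕ) : ℝ) := by
      push_cast; ring
    rw [iN] at h1 h2
    rw [i, hCB _ hn, hCB _ hm, hCB (n + 2 + 2 * q) (by omega)]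
    have hx : (0 : ℝ) < ((n + 2 : ℕ) : ℝ) := by positivity
    have hy : (0 : ℝ) < ((2 * q + 1 : ℕ) : ℝ) := by positivity
    have hN : (0 : ℝ) < ((n + 2 + 2 * q : ℕ) : ℝ) := by positivity
    have hmain := main_odd (1 - β) hb (fun j => (j : ℂ) * a j) p B hp hpp hA
      (by simp) (by simp [ha1]) (by simp [hBdef]) (by simp [hBdef]) hB
      (μ * ((n + 2 + 2 * q : ℕ) : ℝ) / (((n + 2 : ℕ) : ℝ) * ((2 * q + 1 : ℕ) : ℝ)))
      (by
        rw [div_le_iff₀ hN] at h2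
        rw [le_div_iff₀ (by positivity)]; linarith)
      (by
        rw [div_le_iff₀ (by positivity)] at h1
        rw [div_mul_eq_mul_div, le_div_iff₀ (by positivity)]; linarith) n q
    have hxc : ((n + 2 : ℕ) : ℂ) ≠ 0 := by exact_mod_cast hx.ne'
    have hyc : ((2 * q + 1 : ℕ) : ℂ) ≠ 0 := by exact_mod_cast hy.ne'
    have hNc : ((n + 2 + 2 * q : ℕ) : ℂ) ≠ 0 := by exact_mod_cast hN.ne'
    generalize ((n + 2 + 2 * q : ℕ)) = N at *
    generalize (2 * q + 1 : ℕ) = m at *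
    generalize (n + 2 : ℕ) = k at *
    have e1 : ((μ * (N : ℝ) / ((k : ℝ) * (m : ℝ)) : ℝ) : ℂ) * ((k : ℂ) * a k) * ((m : ℂ) * a m)
        - (N : ℂ) * a N = ((N : ℝ) : ℂ) * ((μ : ℂ) * a k * a m - a N) := by
      push_cast; field_simp
    have e2 : μ * (N : ℝ) / ((k : ℝ) * (m : ℝ)) * B k * B m - B N
        = (N : ℝ) * (μ * (B k / k) * (B m / m) - B N / N) := by
      field_simp
    simp only [e1, e2] at hmain
    rw [norm_mul, Complex.norm_real, Real.norm_of_nonneg hN.le] at hmain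
    exact le_of_mul_le_mul_left hmain hN
  have h1 := (le_max_left _ _).trans hμ
  have h2 := (le_max_right _ _).trans hμ
  by_cases hmo : Odd m
  · exact core n m hn hm hmo h1 h2
  · have hno : Odd n := by
      by_contra h
      exact hpar ⟨Nat.not_odd_iff_even.mp h, Nat.not_odd_iff_even.mp hmo⟩
    have := core m n hm hn hno (by rwa [mul_comm (m : ℝ), add_comm (m : ℝ)])
      (by rwa [mul_comm (m : ℝ), add_comm (m : ℝ)])
    rw [add_comm m n, mul_right_comm, mul_right_comm μ] at this
    exact this
end

section
/- Fix a real number β < 1 and for n ≥ 2 define C_n = (1 + (n−1)(1−β))/n if n is odd and C_n = 1−β if n is even. Let f(z) = z + Σ_{n≥2} a_n zⁿ be analytic on the open unit disc 𝔻 with Re((1−z²)f′(z)) > β for all z ∈ 𝔻. Then |a_n| ≤ C_n for every integer n ≥ 2. -/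
open Complex

lemma hs_congr {u v : ℕ → ℂ} {s t : ℂ} (h : HasSum u s) (huv : ∀ k, v k = u k) (hst : t = s) :
    HasSum v t := by
  have : v = u := funext huv
  rw [this, hst]; exact h

lemma exp_int_aux (n : ℤ) : ∫ t in (0:ℝ)..2*Real.pi, cexp (n * I * t) = if n = 0 then (2*Real.pi : ℂ) else 0 := by
  split_ifs with h
  · simp [h]
  · have hc : (n : ℂ) * I ≠ 0 := by simp [h]
    rw [integral_exp_mul_complex hc]
    have : cexp ((n:ℂ) * I * ((2*Real.pi : ℝ) : ℂ)) = 1 := by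
      rw [Complex.exp_eq_one_iff]
      exact ⟨n, by push_cast; ring⟩
    rw [this]; simp

lemma norm_exp_aux (n : ℤ) (t : ℝ) : ‖cexp (n * I * t)‖ = 1 := by
  have : (n : ℂ) * I * t = ((n * t : ℝ) : ℂ) * I := by push_cast; ring
  rw [this, Complex.norm_exp_ofReal_mul_I]

lemma cara (c : ℕ → ℂ) (g : ℂ → ℂ)
    (hg : ∀ z ∈ Metric.ball (0 : ℂ) 1, HasSum (fun k => c k * z ^ k) (g z))
    (hre : ∀ z ∈ Metric.ball (0 : ℂ) 1, 0 ≤ (g z).re) (k : ℕ) (hk : 1 ≤ k) :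
    ‖c k‖ ≤ 2 * (c 0).re := by
  have key : ∀ r : ℝ, r ∈ Set.Ioo (0:ℝ) 1 → ‖c k‖ * r ^ k ≤ 2 * (c 0).re := by
    rintro r ⟨h0, h1⟩
    have hnz : ∀ t : ℝ, ((r:ℂ) * cexp (((1:ℤ):ℂ) * I * t)) ∈ Metric.ball (0:ℂ) 1 := by
      intro t
      rw [mem_ball_zero_iff, norm_mul, norm_exp_aux, mul_one, Complex.norm_real, Real.norm_eq_abs,
        abs_of_pos h0]; exact h1
    set G : ℝ → ℂ := fun t => g ((r:ℂ) * cexp (((1:ℤ):ℂ) * I * t)) with hG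
    have hsum : Summable (fun m => ‖c m‖ * r ^ m) := by
      have := (hg (r:ℂ) (by simpa [abs_of_pos h0] using h1)).summable.norm
      simpa [abs_of_pos h0] using this
    have hGs : ∀ (n : ℤ) (t : ℝ), HasSum (fun m : ℕ => c m * r ^ m * cexp (((m + n : ℤ):ℂ) * I * t))
        (G t * cexp (n * I * t)) := by
      intro n t
      have := (hg _ (hnz t)).mul_right (cexp (n * I * t))
      refine hs_congr this (fun m => ?_) rfl
      have e : cexp (((m + n : ℤ):ℂ) * I * t)
          = cexp ((m:ℂ) * (((1:ℤ):ℂ) * I * t)) * cexp (n * I * t) := by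
        rw [← Complex.exp_add]
        congr 1
        push_cast; ring
      rw [mul_pow, ← Complex.exp_nat_mul, e]
      ring
    have hGc : Continuous G := by
      have : G = fun t : ℝ => ∑' m : ℕ, c m * r ^ m * cexp (((m + (0:ℤ) : ℤ):ℂ) * I * t) := by
        ext t
        have := (hGs 0 t).tsum_eq
        rw [this]; simp
      rw [this]
      refine continuous_tsum (u := fun m => ‖c m‖ * r ^ m) (fun m => by fun_prop) hsum ?_
      intro m t
      rw [norm_mul, norm_exp_aux]
      simp [abs_of_pos h0]
    have hint : ∀ n : ℤ, HasSum (fun m : ℕ => c m * r ^ m * (if (m + n : ℤ) = 0 then (2*Real.pi : ℂ) else 0))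
        (∫ t in (0:ℝ)..2*Real.pi, G t * cexp (n * I * t)) := by
      intro n
      have := intervalIntegral.hasSum_integral_of_dominated_convergence
        (μ := MeasureTheory.volume) (a := 0) (b := 2 * Real.pi)
        (F := fun (m : ℕ) (t : ℝ) => c m * r ^ m * cexp (((m + n : ℤ):ℂ) * I * t))
        (f := fun t => G t * cexp (n * I * t))
        (fun m _ => ‖c m‖ * r ^ m)
        (fun m => (by fun_prop : Continuous _).aestronglyMeasurable)
        (fun m => Filter.Eventually.of_forall fun t _ => by
          rw [norm_mul, norm_exp_aux]; simp [abs_of_pos h0])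
        (Filter.Eventually.of_forall fun t _ => hsum)
        (by simp)
        (Filter.Eventually.of_forall fun t _ => hGs n t)
      refine hs_congr this (fun m => ?_) rfl
      rw [intervalIntegral.integral_const_mul, exp_int_aux]
    have i0 : ∫ t in (0:ℝ)..2*Real.pi, G t = c 0 * (2 * Real.pi) := by
      have h := hint 0
      have h2 := h.unique (hasSum_single 0 (fun m hm => by simp [hm]))
      simpa using h2
    have ik : ∫ t in (0:ℝ)..2*Real.pi, G t * cexp (k * I * t) = 0 := by
      have h := hint k
      have h2 := h.unique (hasSum_single 0 (fun m hm => by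
        rw [if_neg (by omega)]; simp))
      rw [if_neg (by omega)] at h2
      simpa using h2
    have imk : ∫ t in (0:ℝ)..2*Real.pi, G t * cexp (-k * I * t) = c k * r ^ k * (2 * Real.pi) := by
      have h := hint (-k)
      have h2 := h.unique (hasSum_single k (fun m hm => by
        rw [if_neg (by omega)]; simp))
      simpa using h2
    have iconj : ∫ t in (0:ℝ)..2*Real.pi, (starRingEnd ℂ) (G t) * cexp (-k * I * t) = 0 := by
      have h := intervalIntegral.intervalIntegral_conj (f := fun t => G t * cexp (k * I * t))
        (a := 0) (b := 2*Real.pi) (μ := MeasureTheory.volume)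
      rw [ik, map_zero] at h
      rw [← h]
      congr 1; ext t
      rw [map_mul, ← Complex.exp_conj]
      simp
    have isum : ∫ t in (0:ℝ)..2*Real.pi, ((2 * (G t).re : ℝ) : ℂ) * cexp (-k * I * t)
        = c k * r ^ k * (2 * Real.pi) := by
      have c1 : Continuous (fun t : ℝ => G t * cexp (-k * I * t)) := by fun_prop
      have c2 : Continuous (fun t : ℝ => (starRingEnd ℂ) (G t) * cexp (-k * I * t)) :=
        Continuous.mul (continuous_conj.comp hGc) (by fun_prop)
      rw [← imk, ← add_zero (∫ t in (0:ℝ)..2*Real.pi, G t * cexp (-k * I * t)), ← iconj,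
        ← intervalIntegral.integral_add (c1.intervalIntegrable _ _) (c2.intervalIntegrable _ _)]
      congr 1; ext t
      rw [← add_mul, Complex.add_conj]
    have ire : ∫ t in (0:ℝ)..2*Real.pi, 2 * (G t).re = 2 * ((c 0).re * (2 * Real.pi)) := by
      rw [intervalIntegral.integral_const_mul]
      have := reCLM.intervalIntegral_comp_comm (hGc.intervalIntegrable (μ := MeasureTheory.volume) 0 (2*Real.pi))
      simp only [reCLM_apply] at this
      rw [this, i0]
      simp
    have hle := intervalIntegral.norm_integral_le_integral_norm (μ := MeasureTheory.volume)
      (f := fun t : ℝ => ((2 * (G t).re : ℝ) : ℂ) * cexp (-k * I * t)) Real.two_pi_pos.le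
    have hn : ∀ t : ℝ, ‖((2 * (G t).re : ℝ) : ℂ) * cexp (-k * I * t)‖ = 2 * (G t).re := by
      intro t
      have := norm_exp_aux (-k) t
      push_cast at this
      rw [norm_mul, this, mul_one, Complex.norm_real, Real.norm_eq_abs, abs_of_nonneg]
      have := hre _ (hnz t)
      simp only [hG]; linarith
    simp only [hn] at hle
    rw [isum, ire] at hle
    simp only [norm_mul, norm_pow, Complex.norm_real, Real.norm_eq_abs, abs_of_pos h0,
      abs_of_pos Real.pi_pos, Complex.norm_ofNat] at hle
    have := Real.two_pi_pos
    rw [← mul_assoc 2 (c 0).re] at hle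
    exact le_of_mul_le_mul_right hle this
  have ht : Filter.Tendsto (fun r : ℝ => ‖c k‖ * r ^ k) (nhdsWithin 1 (Set.Iio 1)) (nhds (‖c k‖ * 1 ^ k)) :=
    ((by fun_prop : Continuous fun r : ℝ => ‖c k‖ * r ^ k).tendsto 1).mono_left nhdsWithin_le_nhds
  rw [one_pow, mul_one] at ht
  refine le_of_tendsto ht ?_
  filter_upwards [Ioo_mem_nhdsLT (show (0:ℝ) < 1 by norm_num)] with r hr using key r hr

lemma deriv_series (f : ℂ → ℂ) (a : ℕ → ℂ)
    (hf : ∀ z ∈ Metric.ball (0 : ℂ) 1, HasSum (fun k => a k * z ^ k) (f z)) :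
    ∀ z ∈ Metric.ball (0 : ℂ) 1, HasSum (fun k : ℕ => ((k:ℂ) + 1) * a (k+1) * z ^ k) (deriv f z) := by
  have hball : Metric.eball (0:ℂ) 1 = Metric.ball 0 1 := by
    rw [← ENNReal.ofReal_one, Metric.eball_ofReal]
  have hp : HasFPowerSeriesOnBall f (FormalMultilinearSeries.ofScalars ℂ a) 0 1 := by
    refine ⟨?_, by norm_num, ?_⟩
    · refine ENNReal.le_of_forall_nnreal_lt fun r hr => ?_
      have hr : r < 1 := by exact_mod_cast hr
      refine FormalMultilinearSeries.le_radius_of_summable _ ?_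
      have := (hf (r:ℂ) (by simpa using hr)).summable.norm
      simpa [FormalMultilinearSeries.ofScalars_norm] using this
    · intro y hy
      have hy' : y ∈ Metric.ball (0:ℂ) 1 := hball ▸ hy
      have := hf y hy'
      simpa [FormalMultilinearSeries.ofScalars_apply_eq, mul_comm] using this
  have hd : DifferentiableOn ℂ f (Metric.ball 0 1) := by
    rw [← hball]; exact hp.differentiableOn
  have hd' : DifferentiableOn ℂ (deriv f) (Metric.ball 0 1) := hd.deriv Metric.isOpen_ball
  have hcoef : ∀ m, iteratedDeriv m f 0 = m.factorial * a m := by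
    intro m
    have h := hp.hasFPowerSeriesAt.eq_formalMultilinearSeries hp.analyticAt.hasFPowerSeriesAt
    have h2 := congrArg (fun p => FormalMultilinearSeries.coeff p m) h
    simp only [FormalMultilinearSeries.coeff_ofScalars] at h2
    have : (m.factorial : ℂ) ≠ 0 := by exact_mod_cast m.factorial_ne_zero
    rw [h2]
    field_simp
  intro z hz
  have := Complex.hasSum_taylorSeries_on_ball (r := 1) (by simpa using hd') (by simpa using hz)
  refine hs_congr this (fun k => ?_) rfl
  rw [← iteratedDeriv_succ', hcoef, Nat.factorial_succ]
  have : (k.factorial : ℂ) ≠ 0 := by exact_mod_cast k.factorial_ne_zero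
  simp
  field_simp

theorem coeff_bound_F2_beta
    (β : ℝ) (hβ : β < 1) (C : ℕ → ℝ)
    (hC : ∀ n, 2 ≤ n →
      C n = if Odd n then (1 + ((n : ℝ) - 1) * (1 - β)) / n else 1 - β)
    (f : ℂ → ℂ) (a : ℕ → ℂ)
    (ha0 : a 0 = 0) (ha1 : a 1 = 1)
    (hf : ∀ z ∈ Metric.ball (0 : ℂ) 1, HasSum (fun k => a k * z ^ k) (f z))
    (hre : ∀ z ∈ Metric.ball (0 : ℂ) 1, β < ((1 - z ^ 2) * deriv f z).re)
    (n : ℕ) (hn : 2 ≤ n) :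
    ‖a n‖ ≤ C n := by
  have hs := deriv_series f a hf
  -- k a k - (k-2) a (k-2) is bounded
  let b : ℕ → ℂ := fun k => (k:ℂ) * a k
  let c : ℕ → ℂ := fun k => b (k+1) - b (k-1) - (if k = 0 then (β:ℂ) else 0)
  have hb : ∀ z ∈ Metric.ball (0 : ℂ) 1,
      HasSum (fun k => c k * z ^ k) ((1 - z ^ 2) * deriv f z - β) := by
    intro z hz
    have h1 : HasSum (fun k => b (k+1) * z ^ k) (deriv f z) := by
      convert hs z hz using 3 with k
      simp [b]
    have h2 : HasSum (fun k => b (k-1) * z ^ k) (z ^ 2 * deriv f z) := by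
      have h3 := h1.mul_left (z ^ 2)
      rw [← hasSum_nat_add_iff' 2]
      refine hs_congr h3 (fun k => ?_) ?_
      · simp only [show k + 2 - 1 = k + 1 by omega]; ring
      · simp [Finset.sum_range_succ, b]
    have h3 : HasSum (fun k => (if k = 0 then (β:ℂ) else 0) * z ^ k) (β:ℂ) := by
      have := hasSum_single (f := fun k => (if k = 0 then (β:ℂ) else 0) * z ^ k) 0
        (fun m hm => by simp [hm])
      simpa using this
    refine hs_congr ((h1.sub h2).sub h3) (fun k => ?_) ?_
    · simp only [c]; ring
    · ring
  have hc := cara c _ hb (fun z hz => by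
    have := hre z hz
    rw [Complex.sub_re, Complex.ofReal_re]; linarith)
  have hc0 : (c 0).re = 1 - β := by simp [c, b, ha1]
  have hstep : ∀ k, ‖b (k+2)‖ ≤ ‖b k‖ + 2 * (1 - β) := by
    intro k
    have h := hc (k+1) (by omega)
    rw [hc0] at h
    have e : c (k+1) = b (k+2) - b k := by simp [c]
    rw [e] at h
    have := norm_sub_norm_le (b (k+2)) (b k)
    linarith
  have hev : ∀ m, ‖b (2*m)‖ ≤ 2 * m * (1 - β) := by
    intro m
    induction m with
    | zero => simp [b]
    | succ m ih =>
      have := hstep (2*m)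
      rw [show 2 * (m+1) = 2*m+2 by ring]; push_cast; linarith
  have hod : ∀ m, ‖b (2*m+1)‖ ≤ 1 + 2 * m * (1 - β) := by
    intro m
    induction m with
    | zero => simp [b, ha1]
    | succ m ih =>
      have := hstep (2*m+1)
      rw [show 2 * (m+1) + 1 = 2*m+1+2 by ring]; push_cast; linarith
  have hnp : (0:ℝ) < n := by exact_mod_cast (by omega : 0 < n)
  have hbn : ‖b n‖ = n * ‖a n‖ := by simp [b]
  rw [hC n hn]
  split_ifs with h
  · obtain ⟨m, rfl⟩ := h
    have := hod m
    rw [le_div_iff₀ hnp, mul_comm, ← hbn]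
    push_cast; linarith
  · rw [Nat.not_odd_iff_even] at h
    obtain ⟨m, hm⟩ := h
    have := hev m
    rw [show 2 * m = n by omega, hbn] at this
    have e : (2 * m : ℝ) = n := by rw [hm]; push_cast; ring
    rw [e] at this
    exact le_of_mul_le_mul_left this hnp
end

section
/- Fix a real number β < 1, and let f(z) = z + Σ_{n≥2} a_n zⁿ be analytic on the open unit disc 𝔻 with Re f′(z) > β for all z ∈ 𝔻. Then |a_n| ≤ 2(1−β)/n for every integer n ≥ 2. -/
open Complex Metric in
theorem caratheodory_aux (h : ℂ → ℂ) (hd : DifferentiableOn ℂ h (ball 0 1))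
    (hp : ∀ z ∈ ball (0 : ℂ) 1, 0 < (h z).re) (m : ℕ) (hm : 1 ≤ m)
    (r : ℝ) (hr : 0 < r) (hr1 : r < 1) :
    r ^ m * ‖iteratedDeriv m h 0 / (m.factorial : ℂ)‖ ≤ 2 * (h 0).re := by
  have hsub : closedBall (0 : ℂ) r ⊆ ball 0 1 := closedBall_subset_ball hr1
  have hdr : DifferentiableOn ℂ h (closedBall 0 r) := hd.mono hsub
  have hcont : ContinuousOn h (sphere 0 |r|) := by
    rw [abs_of_pos hr]
    exact hdr.continuousOn.mono sphere_subset_closedBall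
  have hinv : ContinuousOn (fun z : ℂ => (z ^ m)⁻¹) (sphere 0 |r|) := by
    apply ContinuousOn.inv₀ (by fun_prop)
    intro z hz hz0
    have : z = 0 := by simpa using (pow_eq_zero_iff (by omega)).1 hz0
    simp [this] at hz
    exact hr.ne' (abs_eq_zero.1 hz.symm)
  have A1 : Real.circleAverage (fun z => (z ^ m)⁻¹ * h z) 0 r
      = iteratedDeriv m h 0 / (m.factorial : ℂ) := by
    rw [Real.circleAverage_eq_circleIntegral hr.ne']
    have := hdr.circleIntegral_one_div_sub_center_pow_smul hr m
    have e : (fun z : ℂ => (z - 0)⁻¹ • ((z ^ m)⁻¹ * h z))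
        = fun z => (1 / (z - 0) ^ (m + 1)) • h z := by
      funext z
      simp [pow_succ, mul_comm, mul_left_comm]
    rw [e, this, smul_smul, smul_eq_mul]
    have := two_pi_I_ne_zero
    field_simp
  have A2 : Real.circleAverage (fun z => z ^ m * h z) 0 r = 0 := by
    have hh : DiffContOnCl ℂ (fun z => z ^ m * h z) (ball 0 |r|) := by
      apply DifferentiableOn.diffContOnCl
      rw [abs_of_pos hr, closure_ball _ hr.ne']
      exact DifferentiableOn.mul (by fun_prop) hdr
    rw [hh.circleAverage]
    simp [show m ≠ 0 by omega]
  have A3 : Real.circleAverage (fun z => (h z).re) 0 r = (h 0).re := by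
    have hh : DiffContOnCl ℂ h (ball 0 |r|) := by
      apply DifferentiableOn.diffContOnCl
      rw [abs_of_pos hr, closure_ball _ hr.ne']
      exact hdr
    have := reCLM.circleAverage_comp_comm (f := h) (c := 0) (R := r) hcont.circleIntegrable'
    rw [hh.circleAverage] at this
    exact this
  have A4 : Real.circleAverage (fun z => (starRingEnd ℂ) (z ^ m * h z)) 0 r = 0 := by
    have := (conjCLE : ℂ →L[ℝ] ℂ).circleAverage_comp_comm (f := fun z => z ^ m * h z)
      (c := 0) (R := r)
      (ContinuousOn.circleIntegrable' (ContinuousOn.mul (by fun_prop) hcont))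
    rw [A2, map_zero] at this
    exact this
  have A5 : Real.circleAverage (fun z => (z ^ m)⁻¹ * (2 * ((h z).re : ℂ))) 0 r
      = iteratedDeriv m h 0 / (m.factorial : ℂ) := by
    have e : Set.EqOn (fun z => (z ^ m)⁻¹ * (2 * ((h z).re : ℂ)))
        (fun z => (z ^ m)⁻¹ * h z + ((r : ℂ) ^ (2 * m))⁻¹ • (starRingEnd ℂ) (z ^ m * h z))
        (sphere 0 |r|) := by
      intro z hz
      have hzr : ‖z‖ = r := by simpa [abs_of_pos hr] using hz
      have hz0 : z ≠ 0 := by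
        rintro rfl
        simp at hzr
        exact hr.ne hzr
      have h1 : z * (starRingEnd ℂ) z = (r : ℂ) ^ 2 := by
        rw [mul_conj, normSq_eq_norm_sq, hzr]; push_cast; rfl
      have h2 : (starRingEnd ℂ) z ^ m = (r : ℂ) ^ (2 * m) * (z ^ m)⁻¹ := by
        rw [pow_mul, ← h1, mul_pow]
        field_simp
      have h3 : (2 * ((h z).re : ℂ)) = h z + (starRingEnd ℂ) (h z) := by
        rw [add_conj]; push_cast; rfl
      have hr0 : (r : ℂ) ^ (2 * m) ≠ 0 := pow_ne_zero _ (by exact_mod_cast hr.ne')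
      simp only [map_mul, map_pow, h2, h3, smul_eq_mul]
      field_simp
    rw [Real.circleAverage_congr_sphere e, Real.circleAverage_fun_add, A1,
      Real.circleAverage_fun_smul, A4, smul_zero, add_zero]
    · exact ContinuousOn.circleIntegrable' (hinv.mul hcont)
    · apply ContinuousOn.circleIntegrable'
      simp only [smul_eq_mul]
      refine ContinuousOn.mul continuousOn_const ?_
      exact continuous_conj.comp_continuousOn (ContinuousOn.mul (by fun_prop) hcont)
  rw [← A5, ← A3, Real.circleAverage_def, Real.circleAverage_def, norm_smul]
  have hmem : ∀ θ, circleMap 0 r θ ∈ sphere (0 : ℂ) |r| := fun θ => circleMap_mem_sphere' _ _ _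
  have hre : Continuous fun θ => (h (circleMap 0 r θ)).re :=
    continuous_re.comp (hcont.comp_continuous (continuous_circleMap _ _) hmem)
  have key : ‖∫ θ in (0 : ℝ)..2 * Real.pi, ((circleMap 0 r θ) ^ m)⁻¹ *
      (2 * ((h (circleMap 0 r θ)).re : ℂ))‖ ≤
      ∫ θ in (0 : ℝ)..2 * Real.pi, (r ^ m)⁻¹ * 2 * (h (circleMap 0 r θ)).re := by
    apply intervalIntegral.norm_integral_le_of_norm_le Real.two_pi_pos.le
    · refine Filter.Eventually.of_forall fun θ _ => ?_
      have hpos := hp (circleMap 0 r θ) (hsub (by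
        simpa [abs_of_pos hr] using (hmem θ).le))
      simp [abs_of_pos hr, abs_of_pos hpos, mul_assoc]
    · exact (continuous_const.mul hre).intervalIntegrable _ _
  rw [intervalIntegral.integral_const_mul] at key
  have hpi := Real.pi_pos
  rw [Real.norm_of_nonneg (by positivity), smul_eq_mul]
  calc _ ≤ r ^ m * ((2 * Real.pi)⁻¹ * ((r ^ m)⁻¹ * 2 *
        ∫ θ in (0 : ℝ)..2 * Real.pi, (h (circleMap 0 r θ)).re)) := by gcongr
    _ = _ := by
      have := (pow_pos hr m).ne'
      field_simp

theorem coeff_bound_Rbeta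
    (β : ℝ) (hβ : β < 1) (f : ℂ → ℂ) (a : ℕ → ℂ)
    (ha0 : a 0 = 0) (ha1 : a 1 = 1)
    (hf : ∀ z ∈ Metric.ball (0 : ℂ) 1, HasSum (fun k => a k * z ^ k) (f z))
    (hre : ∀ z ∈ Metric.ball (0 : ℂ) 1, β < (deriv f z).re)
    (n : ℕ) (hn : 2 ≤ n) :
    ‖a n‖ ≤ 2 * (1 - β) / (n : ℝ) := by
  have F : HasFPowerSeriesOnBall f (FormalMultilinearSeries.ofScalars ℂ a) 0 1 := by
    refine ⟨?_, one_pos, ?_⟩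
    · apply ENNReal.le_of_forall_nnreal_lt
      intro r hr
      have hr1 : (r : ℝ) < 1 := by exact_mod_cast hr
      apply FormalMultilinearSeries.le_radius_of_tendsto (l := 0)
      have := (hf (r : ℂ) (by simpa using hr1)).summable.tendsto_atTop_zero.norm
      simpa [FormalMultilinearSeries.ofScalars_norm] using this
    · intro y hy
      have hy' : y ∈ Metric.ball (0 : ℂ) 1 := by
        rw [← ENNReal.ofReal_one, Metric.eball_ofReal] at hy
        exact hy
      simpa [FormalMultilinearSeries.ofScalars_apply_eq, mul_comm] using hf y hy'
  have hcoef : ∀ k : ℕ, (k.factorial : ℂ) * a k = iteratedDeriv k f 0 := by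
    intro k
    have := F.factorial_smul 1 k
    rw [iteratedFDeriv_apply_eq_iteratedDeriv_mul_prod] at this
    simpa [FormalMultilinearSeries.ofScalars_apply_eq] using this
  have hfd : DifferentiableOn ℂ f (Metric.ball 0 1) := by
    have := F.differentiableOn
    simpa [← ENNReal.ofReal_one, Metric.eball_ofReal] using this
  obtain ⟨m, rfl⟩ : ∃ m, n = m + 1 := ⟨n - 1, by omega⟩
  have hm : 1 ≤ m := by omega
  have hd0 : deriv f 0 = 1 := by
    have := hcoef 1
    simpa [ha1] using this.symm
  have hb : ∀ r : ℝ, 0 < r → r < 1 → r ^ m * (((m + 1 : ℕ) : ℝ) * ‖a (m + 1)‖) ≤ 2 * (1 - β) := by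
    intro r hr hr1
    have := caratheodory_aux (fun z => deriv f z - β)
      ((hfd.deriv Metric.isOpen_ball).sub_const _)
      (fun z hz => by simpa using hre z hz) m hm r hr hr1
    have e : iteratedDeriv m (fun z => deriv f z - (β : ℂ)) 0 / (m.factorial : ℂ)
        = ((m + 1 : ℕ) : ℂ) * a (m + 1) := by
      have e1 : iteratedDeriv m (fun z => deriv f z - (β : ℂ)) 0 = iteratedDeriv m (deriv f) 0 := by
        simp only [sub_eq_neg_add]
        exact iteratedDeriv_const_add (by omega) _
      rw [e1, ← iteratedDeriv_succ', ← hcoef, Nat.factorial_succ]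
      have : (m.factorial : ℂ) ≠ 0 := by exact_mod_cast m.factorial_ne_zero
      push_cast
      field_simp
    rw [e, norm_mul, Complex.norm_natCast] at this
    simpa [hd0] using this
  have hlim : ((m + 1 : ℕ) : ℝ) * ‖a (m + 1)‖ ≤ 2 * (1 - β) := by
    have ht : Filter.Tendsto (fun r : ℝ => r ^ m * (((m + 1 : ℕ) : ℝ) * ‖a (m + 1)‖))
        (nhdsWithin 1 (Set.Iio 1)) (nhds (1 ^ m * (((m + 1 : ℕ) : ℝ) * ‖a (m + 1)‖))) := by
      apply Filter.Tendsto.mono_left _ nhdsWithin_le_nhds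
      exact Continuous.tendsto (by fun_prop) 1
    rw [one_pow, one_mul] at ht
    refine le_of_tendsto ht ?_
    filter_upwards [Ioo_mem_nhdsLT (zero_lt_one' ℝ)] with r hr
    exact hb r hr.1 hr.2
  rw [le_div_iff₀ (by positivity)]
  linarith
end

section
/- Fix a real number α < 1 and for n ≥ 2 set A_n = (1/(n−1)!)·∏_{j=0}^{n−2} (2(1−α)+j). Suppose the complex numbers (a_n)_{n≥2} satisfy a_n = A_n · ∫₀^{2π} e^{i(n−1)t} dν(t) for all n ≥ 2, for some probability measure ν on [0,2π]. Then for every real λ and all integers n ≥ 2: |λ a_n² − a_{2n−1}| ≤ A_{2n−1} whenever 0 ≤ λ ≤ 2A_{2n−1}/A_n², and |λ a_n² − a_{2n−1}| ≤ |λ A_n² − A_{2n−1}| whenever λ < 0 or λ > 2A_{2n−1}/A_n². -/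
open MeasureTheory

lemma zal_key {X : Type*} [MeasurableSpace X] (ν : Measure X) [IsProbabilityMeasure ν]
    (u : X → ℂ) (hu : Measurable u) (h1 : ∀ x, ‖u x‖ = 1) :
    ‖∫ x, u x ∂ν‖ ≤ 1 ∧ ‖∫ x, u x ^ 2 ∂ν‖ ≤ 1 ∧
    ‖2 * (∫ x, u x ∂ν) ^ 2 - ∫ x, u x ^ 2 ∂ν‖ ≤ 1 := by
  have i1 : Integrable u ν :=
    Integrable.of_bound hu.aestronglyMeasurable 1 (by simp [h1])
  have i2 : Integrable (fun x => u x ^ 2) ν :=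
    Integrable.of_bound (hu.pow_const 2).aestronglyMeasurable 1 (by simp [h1])
  have b1 : ‖∫ x, u x ∂ν‖ ≤ 1 := by
    have := norm_integral_le_of_norm_le_const (μ := ν) (f := u) (C := 1) (by simp [h1])
    simpa using this
  have b2 : ‖∫ x, u x ^ 2 ∂ν‖ ≤ 1 := by
    have := norm_integral_le_of_norm_le_const (μ := ν) (f := fun x => u x ^ 2) (C := 1)
      (by simp [h1])
    simpa using this
  refine ⟨b1, b2, ?_⟩
  set c := ∫ x, u x ∂ν with hc
  have e1 : ∫ x, (u x - c) ^ 2 ∂ν = (∫ x, u x ^ 2 ∂ν) - c ^ 2 := by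
    have : ∀ x, (u x - c) ^ 2 = u x ^ 2 - (2 * c) * u x + c ^ 2 := fun x => by ring
    simp_rw [this]
    have i3 : Integrable (fun x => u x ^ 2 - (2 * c) * u x) ν := i2.sub (i1.const_mul _)
    rw [integral_add i3 (integrable_const _),
      integral_sub i2 (i1.const_mul _), integral_const_mul, ← hc]
    simp
    ring
  have hre : ∫ x, (u x).re ∂ν = c.re := integral_re i1
  have him : ∫ x, (u x).im ∂ν = c.im := integral_im i1
  have ire : Integrable (fun x => (u x).re) ν := i1.re
  have iim : Integrable (fun x => (u x).im) ν := i1.im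
  have e2 : ∫ x, ‖(u x - c) ^ 2‖ ∂ν = 1 - ‖c‖ ^ 2 := by
    have : ∀ x, ‖(u x - c) ^ 2‖
        = (1 + ‖c‖ ^ 2) - ((2 * c.re) * (u x).re + (2 * c.im) * (u x).im) := fun x => by
      have h := h1 x
      have h2 : ‖u x‖ ^ 2 = 1 := by rw [h]; norm_num
      rw [Complex.sq_norm, Complex.normSq_apply] at h2
      rw [norm_pow, Complex.sq_norm, Complex.sq_norm, Complex.normSq_apply, Complex.normSq_apply,
        Complex.sub_re, Complex.sub_im]
      linear_combination h2
    simp_rw [this]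
    have i4 : Integrable (fun x => (2 * c.re) * (u x).re + (2 * c.im) * (u x).im) ν :=
      (ire.const_mul _).add (iim.const_mul _)
    rw [integral_sub (integrable_const _) i4,
      integral_add (ire.const_mul _) (iim.const_mul _), integral_const_mul, integral_const_mul,
      hre, him, Complex.sq_norm, Complex.normSq_apply]
    simp
    ring
  have e3 := norm_integral_le_integral_norm (μ := ν) (fun x => (u x - c) ^ 2)
  rw [e1, e2] at e3
  calc ‖2 * c ^ 2 - ∫ x, u x ^ 2 ∂ν‖ = ‖c ^ 2 - ((∫ x, u x ^ 2 ∂ν) - c ^ 2)‖ := by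
        congr 1; ring
    _ ≤ ‖c ^ 2‖ + ‖(∫ x, u x ^ 2 ∂ν) - c ^ 2‖ := norm_sub_le _ _
    _ ≤ 1 := by rw [norm_pow]; linarith

theorem zalcman_hull_starlike_diagonal
    (α : ℝ) (hα : α < 1) (A : ℕ → ℝ)
    (hA : ∀ n, A n = (∏ j ∈ Finset.range (n - 1), (2 * (1 - α) + (j : ℝ))) /
      (Nat.factorial (n - 1) : ℝ))
    (ν : Measure (Set.Icc (0 : ℝ) (2 * Real.pi))) [IsProbabilityMeasure ν]
    (a : ℕ → ℂ)
    (ha : ∀ n, 2 ≤ n →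
      a n = (A n : ℂ) * ∫ t, Complex.exp (Complex.I * (n - 1 : ℕ) * ((t : ℝ) : ℂ)) ∂ν)
    (lam : ℝ) (n : ℕ) (hn : 2 ≤ n) :
    (0 ≤ lam ∧ lam ≤ 2 * A (2 * n - 1) / (A n ^ 2) →
      ‖(lam : ℂ) * a n ^ 2 - a (2 * n - 1)‖ ≤ A (2 * n - 1)) ∧
    (lam < 0 ∨ 2 * A (2 * n - 1) / (A n ^ 2) < lam →
      ‖(lam : ℂ) * a n ^ 2 - a (2 * n - 1)‖ ≤ |lam * A n ^ 2 - A (2 * n - 1)|) := by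
  have hpos : ∀ m, 0 < A m := fun m => by
    rw [hA]
    apply div_pos
    · exact Finset.prod_pos fun j _ => by
        have : (0:ℝ) ≤ j := Nat.cast_nonneg j
        linarith
    · exact_mod_cast Nat.factorial_pos _
  obtain ⟨b1, b2, b3⟩ := zal_key ν
    (fun t => Complex.exp (Complex.I * (n - 1 : ℕ) * ((t : ℝ) : ℂ)))
    (Continuous.measurable (by fun_prop)) (fun t => by
      rw [Complex.norm_exp]; simp)
  have h2 : ∀ t : Set.Icc (0 : ℝ) (2 * Real.pi),
      Complex.exp (Complex.I * (2 * n - 1 - 1 : ℕ) * ((t : ℝ) : ℂ))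
      = Complex.exp (Complex.I * (n - 1 : ℕ) * ((t : ℝ) : ℂ)) ^ 2 := fun t => by
    rw [← Complex.exp_nat_mul]
    have : 2 * n - 1 - 1 = 2 * (n - 1) := by omega
    rw [this]
    congr 1
    push_cast
    ring
  have hP := hpos n
  have hQ := hpos (2 * n - 1)
  rw [ha n hn, ha (2 * n - 1) (by omega)]
  simp_rw [h2]
  generalize (∫ t : Set.Icc (0 : ℝ) (2 * Real.pi),
    Complex.exp (Complex.I * (n - 1 : ℕ) * ((t : ℝ) : ℂ)) ∂ν) = c at *
  generalize (∫ t : Set.Icc (0 : ℝ) (2 * Real.pi),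
    Complex.exp (Complex.I * (n - 1 : ℕ) * ((t : ℝ) : ℂ)) ^ 2 ∂ν) = d at *
  generalize A n = P at *
  generalize A (2 * n - 1) = Q at *
  have hP2 : 0 < P ^ 2 := by positivity
  have bc : ‖c ^ 2‖ ≤ 1 := by rw [norm_pow]; exact pow_le_one₀ (norm_nonneg _) b1
  -- general estimate
  have gen : ∀ r s t : ℝ, r + 2 * s = lam * P ^ 2 → s + t = Q →
      ‖(lam : ℂ) * ((P : ℂ) * c) ^ 2 - (Q : ℂ) * d‖ ≤ |r| + |s| + |t| := by
    intro r s t h h'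
    have h3 : (r : ℂ) + 2 * s = lam * P ^ 2 := by exact_mod_cast h
    have h4 : (s : ℂ) + t = Q := by exact_mod_cast h'
    have : (lam : ℂ) * ((P : ℂ) * c) ^ 2 - (Q : ℂ) * d
        = r * c ^ 2 + s * (2 * c ^ 2 - d) - t * d := by
      linear_combination (-c ^ 2) * h3 + d * h4
    rw [this]
    refine (norm_sub_le _ _).trans (add_le_add ((norm_add_le _ _).trans (add_le_add ?_ ?_)) ?_)
    all_goals
      rw [norm_mul, Complex.norm_real, Real.norm_eq_abs]
      exact mul_le_of_le_one_right (abs_nonneg _) (by assumption)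
  constructor
  · rintro ⟨hl, hu⟩
    rw [le_div_iff₀ hP2] at hu
    have h0 : 0 ≤ lam * P ^ 2 := by positivity
    have := gen 0 (lam * P ^ 2 / 2) (Q - lam * P ^ 2 / 2) (by ring) (by ring)
    rw [abs_zero, abs_of_nonneg (by linarith), abs_of_nonneg (by linarith)] at this
    linarith
  · rintro (hl | hu)
    · have h0 : lam * P ^ 2 < 0 := mul_neg_of_neg_of_pos hl hP2
      have := gen (lam * P ^ 2) 0 Q (by ring) (by ring)
      rw [abs_zero, abs_of_neg h0, abs_of_pos hQ] at this
      rw [abs_of_neg (by linarith)]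
      linarith
    · rw [div_lt_iff₀ hP2] at hu
      have := gen (lam * P ^ 2 - 2 * Q) Q 0 (by ring) (by ring)
      rw [abs_zero, abs_of_pos hQ, abs_of_pos (by linarith)] at this
      rw [abs_of_pos (by linarith)]
      linarith
end

section
/- Fix a real number α < 1 and for n ≥ 2 set A_n = (1/(n−1)!)·∏_{j=0}^{n−2} (2(1−α)+j). Suppose the complex numbers (a_n)_{n≥2} satisfy a_n = (A_n/n) · ∫₀^{2π} e^{i(n−1)t} dν(t) for all n ≥ 2, for some probability measure ν on [0,2π]. Then for every real λ and all integers n ≥ 2: |λ a_n² − a_{2n−1}| ≤ A_{2n−1}/(2n−1) whenever 0 ≤ λ ≤ 2n²·A_{2n−1}/((2n−1)·A_n²), and |λ a_n² − a_{2n−1}| ≤ |λ·A_n²/n² − A_{2n−1}/(2n−1)| whenever λ < 0 or λ > 2n²·A_{2n−1}/((2n−1)·A_n²). -/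
open MeasureTheory

lemma key_var {Ω : Type*} [MeasurableSpace Ω] (ν : Measure Ω) [IsProbabilityMeasure ν]
    (u : Ω → ℂ) (hm : Measurable u) (hu : ∀ t, ‖u t‖ = 1) :
    ‖(∫ t, u t ∂ν)‖ ≤ 1 ∧
    ‖(∫ t, u t ^ 2 ∂ν) - (∫ t, u t ∂ν) ^ 2‖ ≤ 1 - ‖(∫ t, u t ∂ν)‖ ^ 2 := by
  have hi : Integrable u ν :=
    Integrable.of_bound hm.aestronglyMeasurable 1 (by filter_upwards with t; rw [hu t])
  have hi2 : Integrable (fun t => u t ^ 2) ν :=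
    Integrable.of_bound (hm.pow_const 2).aestronglyMeasurable 1
      (by filter_upwards with t; rw [norm_pow, hu t]; norm_num)
  have hre : Integrable (fun t => (u t).re) ν := hi.re
  have him : Integrable (fun t => (u t).im) ν := hi.im
  set p := ∫ t, u t ∂ν with hp
  have hpre : ∫ t, (u t).re ∂ν = p.re := integral_re hi
  have hpim : ∫ t, (u t).im ∂ν = p.im := integral_im hi
  constructor
  · have := norm_integral_le_of_norm_le_const (μ := ν) (f := u) (C := 1)
      (by filter_upwards with t; rw [hu t])
    simpa using this
  · have e1 : (∫ t, u t ^ 2 ∂ν) - p ^ 2 = ∫ t, (u t - p) ^ 2 ∂ν := by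
      have : (fun t => (u t - p) ^ 2) = fun t => (u t ^ 2 - (2 * p) * u t) + p ^ 2 := by
        funext t; ring
      have hj : Integrable (fun t => u t ^ 2 - (2 * p) * u t) ν := hi2.sub (hi.const_mul _)
      rw [this, integral_add hj (integrable_const _),
        integral_sub hi2 (hi.const_mul _), integral_const_mul, ← hp]
      simp
      ring
    have e2 : ∫ t, ‖u t - p‖ ^ 2 ∂ν = 1 - ‖p‖ ^ 2 := by
      have : (fun t => ‖u t - p‖ ^ 2) =
          fun t => (1 + ‖p‖ ^ 2) - ((2 * p.re) * (u t).re + (2 * p.im) * (u t).im) := by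
        funext t
        have h := hu t
        have h2 : ‖u t‖ ^ 2 = 1 := by rw [h]; norm_num
        rw [← Complex.normSq_eq_norm_sq, Complex.normSq_apply] at h2 ⊢
        rw [← Complex.normSq_eq_norm_sq, Complex.normSq_apply]
        simp only [Complex.sub_re, Complex.sub_im]
        linarith
      have hj : Integrable (fun t => (2 * p.re) * (u t).re + (2 * p.im) * (u t).im) ν :=
        (hre.const_mul _).add (him.const_mul _)
      rw [this, integral_sub (integrable_const _) hj,
        integral_add (hre.const_mul _) (him.const_mul _), integral_const_mul,
        integral_const_mul, hpre, hpim, ← Complex.normSq_eq_norm_sq, Complex.normSq_apply]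
      simp
      ring
    rw [e1, ← e2]
    refine (norm_integral_le_integral_norm _).trans (le_of_eq ?_)
    simp only [norm_pow]

theorem zalcman_hull_convex_diagonal
    (α : ℝ) (hα : α < 1) (A : ℕ → ℝ)
    (hA : ∀ n, A n = (∏ j ∈ Finset.range (n - 1), (2 * (1 - α) + (j : ℝ))) /
      (Nat.factorial (n - 1) : ℝ))
    (ν : Measure (Set.Icc (0 : ℝ) (2 * Real.pi))) [IsProbabilityMeasure ν]
    (a : ℕ → ℂ)
    (ha : ∀ n, 2 ≤ n →
      a n = ((A n : ℂ) / (n : ℂ)) *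
        ∫ t, Complex.exp (Complex.I * (n - 1 : ℕ) * ((t : ℝ) : ℂ)) ∂ν)
    (lam : ℝ) (n : ℕ) (hn : 2 ≤ n) :
    (0 ≤ lam ∧ lam ≤ 2 * n ^ 2 * A (2 * n - 1) / ((2 * (n : ℝ) - 1) * A n ^ 2) →
      ‖(lam : ℂ) * a n ^ 2 - a (2 * n - 1)‖ ≤ A (2 * n - 1) / (2 * (n : ℝ) - 1)) ∧
    (lam < 0 ∨ 2 * n ^ 2 * A (2 * n - 1) / ((2 * (n : ℝ) - 1) * A n ^ 2) < lam →
      ‖(lam : ℂ) * a n ^ 2 - a (2 * n - 1)‖ ≤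
        |lam * A n ^ 2 / (n : ℝ) ^ 2 - A (2 * n - 1) / (2 * (n : ℝ) - 1)|) := by
  have hpos : ∀ m, 0 < A m := by
    intro m
    rw [hA]
    refine div_pos (Finset.prod_pos fun j _ => ?_) (by positivity)
    have : (0 : ℝ) ≤ j := by positivity
    linarith
  have hu := key_var ν
    (fun t => Complex.exp (Complex.I * (n - 1 : ℕ) * ((t : ℝ) : ℂ)))
    (by fun_prop) (by
      intro t
      rw [Complex.norm_exp]
      simp)
  have h1 := ha n hn
  have h2 := ha (2 * n - 1) (by omega)
  have e : ∀ t : Set.Icc (0 : ℝ) (2 * Real.pi),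
      Complex.exp (Complex.I * (2 * n - 1 - 1 : ℕ) * ((t : ℝ) : ℂ)) =
      Complex.exp (Complex.I * (n - 1 : ℕ) * ((t : ℝ) : ℂ)) ^ 2 := by
    intro t
    rw [← Complex.exp_nat_mul]
    have : 2 * n - 1 - 1 = 2 * (n - 1) := by omega
    rw [this]
    push_cast
    congr 1
    ring
  simp only [e] at h2
  set p := ∫ t : Set.Icc (0 : ℝ) (2 * Real.pi),
    Complex.exp (Complex.I * (n - 1 : ℕ) * ((t : ℝ) : ℂ)) ∂ν with hp
  set q := ∫ t : Set.Icc (0 : ℝ) (2 * Real.pi),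
    Complex.exp (Complex.I * (n - 1 : ℕ) * ((t : ℝ) : ℂ)) ^ 2 ∂ν with hq
  obtain ⟨hp1, hpq⟩ := hu
  have hn' : (2 : ℝ) ≤ n := by exact_mod_cast hn
  have hcast : (((2 * n - 1 : ℕ)) : ℂ) = ((2 * (n : ℝ) - 1 : ℝ) : ℂ) := by
    rw [Nat.cast_sub (by omega)]; push_cast; ring
  have hAn := hpos n
  have hA2 := hpos (2 * n - 1)
  have hd : (0 : ℝ) < 2 * n - 1 := by linarith
  set C : ℝ := A (2 * n - 1) / (2 * (n : ℝ) - 1) with hC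
  set B : ℝ := A n ^ 2 / (n : ℝ) ^ 2 with hB
  have hCpos : 0 < C := by positivity
  have hBpos : 0 < B := by positivity
  have hth : 2 * n ^ 2 * A (2 * n - 1) / ((2 * (n : ℝ) - 1) * A n ^ 2) = 2 * C / B := by
    rw [hC, hB]; field_simp
  have hmu : lam * A n ^ 2 / (n : ℝ) ^ 2 = lam * B := by rw [hB]; ring
  have hkey : ‖(lam : ℂ) * a n ^ 2 - a (2 * n - 1)‖ ≤
      |lam * B - C| * ‖p‖ ^ 2 + C * (1 - ‖p‖ ^ 2) := by
    have : (lam : ℂ) * a n ^ 2 - a (2 * n - 1) =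
        ((lam * B - C : ℝ) : ℂ) * p ^ 2 - (C : ℂ) * (q - p ^ 2) := by
      rw [h1, h2, hcast, hC, hB]
      push_cast
      ring
    rw [this]
    refine (norm_sub_le _ _).trans ?_
    rw [norm_mul, norm_mul, norm_pow, Complex.norm_real, Complex.norm_real, Real.norm_eq_abs,
      Real.norm_eq_abs, abs_of_pos hCpos]
    gcongr
  have hP0 : 0 ≤ ‖p‖ ^ 2 := by positivity
  have hP1 : ‖p‖ ^ 2 ≤ 1 := pow_le_one₀ (norm_nonneg _) hp1
  rw [hth, hmu]
  constructor
  · rintro ⟨l0, l1⟩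
    rw [le_div_iff₀ hBpos] at l1
    have : |lam * B - C| ≤ C := by
      have := mul_nonneg l0 hBpos.le
      rw [abs_le]; constructor <;> linarith
    nlinarith
  · intro h
    have : C ≤ |lam * B - C| := by
      rw [le_abs]
      rcases h with h | h
      · right
        have := mul_neg_of_neg_of_pos h hBpos
        linarith
      · left
        rw [div_lt_iff₀ hBpos] at h
        linarith
    nlinarith
end
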